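/- Let 𝔤 be a finite-dimensional nilpotent Lie algebra over ℝ, X ∈ 𝔤, (𝔤^(i))_{i≥1} the weight filtration associated to X and (𝔤^[a])_{a≥1} the lower central series. Assume that 𝔤^[a] = 𝔤^(2a−1) for every a ≥ 1. Then 𝔤^(2a) = 𝔤^(2a+1) for every a ≥ 1 (i.e. the weight filtration only jumps at odd weights). -/

import Mathlib

/-!
The theorem follows from `𝔤⁽²ᵃ⁾ = 𝔤^[a+1]` for `a ≥ 1`, since `𝔤⁽²ᵃ⁺¹⁾ = 𝔤^[a+1]` by
hypothesis. This identity is proved by induction on `a`: in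
`𝔤⁽²ᵃ⁺²⁾ = ⁅𝔤, 𝔤⁽²ᵃ⁺¹⁾⁆ + ⁅X, 𝔤⁽²ᵃ⁾⁆` the hypothesis and the induction hypothesis identify both
`𝔤⁽²ᵃ⁺¹⁾` and `𝔤⁽²ᵃ⁾` with `𝔤^[a+1]`, so the second summand is contained in the first, which
is `𝔤^[a+2]`.
-/

variable {L : Type*} [LieRing L] [LieAlgebra ℝ L]

/-- The linear span of all brackets `⁅x, y⁆` with `x ∈ A` and `y ∈ B`. -/
def bracketSpan (A B : Submodule ℝ L) : Submodule ℝ L :=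
  Submodule.span ℝ {z : L | ∃ x ∈ A, ∃ y ∈ B, z = ⁅x, y⁆}

/-- The linear span of all brackets `⁅X, y⁆` with `y ∈ S`. -/
def adSpan (X : L) (S : Submodule ℝ L) : Submodule ℝ L :=
  Submodule.span ℝ {z : L | ∃ y ∈ S, z = ⁅X, y⁆}

/-- The weight filtration of a Lie algebra associated to `X`:
`𝔤⁽⁰⁾ = 𝔤⁽¹⁾ = 𝔤` and `𝔤⁽ⁱ⁺¹⁾ = ⁅𝔤, 𝔤⁽ⁱ⁾⁆ + ⁅X, 𝔤⁽ⁱ⁻¹⁾⁆` for `i ≥ 1`. -/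
def weightFiltration (X : L) : ℕ → Submodule ℝ L
  | 0 => ⊤
  | 1 => ⊤
  | (i + 2) =>
      bracketSpan (⊤ : Submodule ℝ L) (weightFiltration X (i + 1)) ⊔
        adSpan X (weightFiltration X i)


/-- The lower central series: `𝔤^[1] = 𝔤` and `𝔤^[i+1] = ⁅𝔤, 𝔤^[i]⁆`
(`lowerCentral L 0` is a junk value equal to `𝔤`). -/
def lowerCentral (L : Type*) [LieRing L] [LieAlgebra ℝ L] : ℕ → Submodule ℝ L
  | 0 => ⊤
  | 1 => ⊤
  | (i + 2) => bracketSpan (⊤ : Submodule ℝ L) (lowerCentral L (i + 1))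

theorem adSpan_le_bracketSpan_top (X : L) (S : Submodule ℝ L) :
    adSpan X S ≤ bracketSpan ⊤ S :=
  Submodule.span_mono fun _ ⟨y, hy, hz⟩ => ⟨X, trivial, y, hy, hz⟩

/-- The even-indexed terms `𝔤⁽²ᵃ⁾`, `a ≥ 1` (here shifted by one), are also lower central series
terms. -/
theorem weightFiltration_even_eq_lowerCentral (X : L)
    (hA : ∀ a : ℕ, lowerCentral L (a + 1) = weightFiltration X (2 * a + 1)) (a : ℕ) :
    weightFiltration X (2 * a + 2) = lowerCentral L (a + 2) := by
  induction a with
  | zero => exact sup_eq_left.2 (adSpan_le_bracketSpan_top X ⊤)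
  | succ a ih =>
    change bracketSpan ⊤ (weightFiltration X (2 * (a + 1) + 1)) ⊔
      adSpan X (weightFiltration X (2 * a + 2)) = bracketSpan ⊤ (lowerCentral L (a + 2))
    rw [← hA (a + 1), ih]
    exact sup_eq_left.2 (adSpan_le_bracketSpan_top X _)

/-- If `𝔤^[a] = 𝔤⁽²ᵃ⁻¹⁾` for all `a ≥ 1`, then the weight filtration only jumps at odd
weights: `𝔤⁽²ᵃ⁾ = 𝔤⁽²ᵃ⁺¹⁾` for all `a ≥ 1`. Indices are shifted so that `a + 1` ranges
over the integers `≥ 1`. -/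
theorem weightFiltration_even_eq_odd (X : L) [FiniteDimensional ℝ L]
    (hnil : ∃ s : ℕ, lowerCentral L s = ⊥)
    (hA : ∀ a : ℕ, lowerCentral L (a + 1) = weightFiltration X (2 * a + 1)) :
    ∀ a : ℕ, weightFiltration X (2 * a + 2) = weightFiltration X (2 * a + 3) := by
  intro a
  rw [weightFiltration_even_eq_lowerCentral X hA a]
  exact hA (a + 1)
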